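/- The real-linear map A₁ : ℍ₁ → M₂(𝒜) sending q = iq₀1 + q₁I + iq₂J + q₃K (q₀,…,q₃ ∈ 𝒜) to the matrix [[−q₁ − σq₀, −q₃ − σq₂], [−q₃ + σq₂, q₁ − σq₀]] is a linear isomorphism, and for every q ∈ ℍ₁ one has H(q, q) = −det A₁(q) and A₁(\widehat{q̄}) = −A₁(q)*. -/

import Mathlib

noncomputable section

/-! ### The algebra `𝒜` of Lorentz (split-complex) numbers.

We realize `𝒜` (the real algebra with basis `{1, σ}`, `σ² = 1`) in split coordinates:
`(x, y) : ℝ × ℝ` represents `u + σ v` with `x = u + v`, `y = u - v`.  Multiplication is then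
componentwise, `1 = (1,1)`, and `σ = (1, -1)` satisfies `σ² = 1`. -/

abbrev LorentzA : Type := ℝ × ℝ

/-- The element `σ ∈ 𝒜`, with `σ² = 1`, `σ ∉ ℝ·1`. -/
def sA : LorentzA := (1, -1)

/-- The element `u + σ v` of `𝒜`. -/
def mkA (u v : ℝ) : LorentzA := (u + v, u - v)

/-- The inclusion `ℝ ⊆ 𝒜`, `t ↦ t·1`. -/
def toA (t : ℝ) : LorentzA := (t, t)

/-- Conjugation of `𝒜`: `u + σ v ↦ u - σ v` (the swap, in split coordinates). -/
def conjA (a : LorentzA) : LorentzA := (a.2, a.1)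

/-- `|a|² := a·â = u² - v²`, as a real number (so that `a * conjA a = toA (nsqA a)`). -/
def nsqA (a : LorentzA) : ℝ := a.1 * a.2

/-- The real part of `a = u + σ v ∈ 𝒜`, namely `u`. -/
def ReA (a : LorentzA) : ℝ := (a.1 + a.2) / 2

/-- The imaginary part of `a = u + σ v ∈ 𝒜`, namely `v`. -/
def ImA (a : LorentzA) : ℝ := (a.1 - a.2) / 2

/-- The idempotent `(1 + σ)/2` of `𝒜`. -/
def eP : LorentzA := (1 + sA) / 2

/-- The idempotent `(1 - σ)/2` of `𝒜`. -/
def eM : LorentzA := (1 - sA) / 2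

/-! ### Derivatives of maps `ℝ² → 𝒜` and `ℝ² → ℝ`. -/

/-- `∂_u f`. -/
def duA (f : ℝ × ℝ → LorentzA) (x : ℝ × ℝ) : LorentzA := fderiv ℝ f x (1, 0)

/-- `∂_v f`. -/
def dvA (f : ℝ × ℝ → LorentzA) (x : ℝ × ℝ) : LorentzA := fderiv ℝ f x (0, 1)

/-- `∂_a f = ½ (∂_u f + σ ∂_v f)`. -/
def Da (f : ℝ × ℝ → LorentzA) (x : ℝ × ℝ) : LorentzA := ((2:ℝ)⁻¹) • (duA f x + sA * dvA f x)

/-- `∂_â f = ½ (∂_u f - σ ∂_v f)`.  A map is conformal iff `∂_â f = 0`. -/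
def Dahat (f : ℝ × ℝ → LorentzA) (x : ℝ × ℝ) : LorentzA := ((2:ℝ)⁻¹) • (duA f x - sA * dvA f x)

/-- `∂_u f` for real-valued `f`. -/
def duR (f : ℝ × ℝ → ℝ) (x : ℝ × ℝ) : ℝ := fderiv ℝ f x (1, 0)

/-- `∂_v f` for real-valued `f`. -/
def dvR (f : ℝ × ℝ → ℝ) (x : ℝ × ℝ) : ℝ := fderiv ℝ f x (0, 1)

/-- `∂²f/∂u²`. -/
def duuR (f : ℝ × ℝ → ℝ) (x : ℝ × ℝ) : ℝ := fderiv ℝ (fun y => fderiv ℝ f y (1, 0)) x (1, 0)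

/-- `∂²f/∂v²`. -/
def dvvR (f : ℝ × ℝ → ℝ) (x : ℝ × ℝ) : ℝ := fderiv ℝ (fun y => fderiv ℝ f y (0, 1)) x (0, 1)

/-- The wave operator `□ f = -∂²f/∂u² + ∂²f/∂v²`. -/
def boxR (f : ℝ × ℝ → ℝ) (x : ℝ × ℝ) : ℝ := -duuR f x + dvvR f x

/-! ### 2×2 matrices over `𝒜`. -/

abbrev M2A := Matrix (Fin 2) (Fin 2) LorentzA

/-- The conjugate transpose `B*` of `B ∈ M₂(𝒜)`. -/
def ctrans (B : M2A) : M2A := (B.map conjA).transpose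

/-- `Herm₂(𝒜) = {B ∈ M₂(𝒜) : B = B*}`. -/
def Herm2 : Set M2A := {B | B = ctrans B}

/-- `SL₂(𝒜) = {B ∈ M₂(𝒜) : det B = 1}`. -/
def SL2A : Set M2A := {B | B.det = 1}

/-- The inclusion `M₂(ℝ) ⊆ M₂(𝒜)`. -/
def mR (C : Matrix (Fin 2) (Fin 2) ℝ) : M2A := C.map toA

/-! ### The complexified Lorentz numbers `𝒜_ℂ = 𝒜 ⊗ ℂ ≅ ℂ × ℂ` (split coordinates),
and the quaternions `ℍ^{𝒜_ℂ}` with coefficients in `𝒜_ℂ`. -/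

abbrev AC : Type := ℂ × ℂ

/-- `σ ∈ 𝒜_ℂ`. -/
def sC : AC := (1, -1)

/-- The complex unit `i ∈ 𝒜_ℂ`. -/
def iC : AC := (Complex.I, Complex.I)

/-- Conjugation `u + σ v ↦ u - σ v` (`u, v ∈ ℂ`) of `𝒜_ℂ`. -/
def hatC (z : AC) : AC := (z.2, z.1)

/-- The inclusion `ℝ ⊆ 𝒜_ℂ`. -/
def rc (t : ℝ) : AC := ((t : ℂ), (t : ℂ))

/-- The inclusion `𝒜 ⊆ 𝒜_ℂ`. -/
def toAC (a : LorentzA) : AC := ((a.1 : ℂ), (a.2 : ℂ))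

/-- `a ↦ i·a`, the image of `𝒜` in `i·𝒜 ⊆ 𝒜_ℂ`. -/
def iAC (a : LorentzA) : AC := (Complex.I * a.1, Complex.I * a.2)

/-- `ℍ^{𝒜_ℂ}`: quaternions `ζ₀·1 + ζ₁·I + ζ₂·J + ζ₃·K` with `ζᵢ ∈ 𝒜_ℂ`,
`I² = J² = K² = -1`, `IJ = -JI = K`. -/
abbrev HAC := Quaternion AC

/-- The scalar quaternion `z·1`. -/
def qscalar (z : AC) : HAC := ⟨z, 0, 0, 0⟩

/-- The quaternion unit `I`. -/
def qI : HAC := ⟨0, 1, 0, 0⟩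

/-- The quaternion unit `J`. -/
def qJ : HAC := ⟨0, 0, 1, 0⟩

/-- The quaternion unit `K`. -/
def qK : HAC := ⟨0, 0, 0, 1⟩

/-- `ζ̂`: apply `𝒜_ℂ`-conjugation to each coefficient of a quaternion.
(Quaternionic conjugation `ζ̄` is `star ζ`.) -/
def qhat (q : HAC) : HAC := ⟨hatC q.re, hatC q.imI, hatC q.imJ, hatC q.imK⟩

/-- `H(ζ, ζ') = ½(ζ ζ̄' + ζ' ζ̄) = ζ₀ζ₀' + ζ₁ζ₁' + ζ₂ζ₂' + ζ₃ζ₃' ∈ 𝒜_ℂ`. -/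
def Hform (q q' : HAC) : AC := q.re * q'.re + q.imI * q'.imI + q.imJ * q'.imJ + q.imK * q'.imK

/-- `p₀·1 + i p₁·I + p₂·J + i p₃·K` with `pᵢ ∈ 𝒜`: the generic element of `ℍ₀`. -/
def mk0 (p₀ p₁ p₂ p₃ : LorentzA) : HAC :=
  qscalar (toAC p₀) + qscalar (iAC p₁) * qI + qscalar (toAC p₂) * qJ + qscalar (iAC p₃) * qK

/-- `i q₀·1 + q₁·I + i q₂·J + q₃·K` with `qᵢ ∈ 𝒜`: the generic element of `ℍ₁`. -/
def mk1 (q₀ q₁ q₂ q₃ : LorentzA) : HAC :=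
  qscalar (iAC q₀) + qscalar (toAC q₁) * qI + qscalar (iAC q₂) * qJ + qscalar (toAC q₃) * qK

/-- `ℍ₀ = {p₀·1 + i p₁·I + p₂·J + i p₃·K : pᵢ ∈ 𝒜} ⊆ ℍ^{𝒜_ℂ}`. -/
def H0set : Set HAC := {ζ | ∃ p₀ p₁ p₂ p₃ : LorentzA, ζ = mk0 p₀ p₁ p₂ p₃}

/-- `ℍ₁ = {i q₀·1 + q₁·I + i q₂·J + q₃·K : qᵢ ∈ 𝒜} ⊆ ℍ^{𝒜_ℂ}`. -/
def H1set : Set HAC := {ζ | ∃ q₀ q₁ q₂ q₃ : LorentzA, ζ = mk1 q₀ q₁ q₂ q₃}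

/-- `Spin(2,2) = {p ∈ ℍ₀ : H(p,p) = 1}`. -/
def SpinSet : Set HAC := {p | p ∈ H0set ∧ Hform p p = 1}

/-- Extraction of the `𝒜`-coefficient of an element of `𝒜 ⊆ 𝒜_ℂ`. -/
def reEx (z : AC) : LorentzA := (z.1.re, z.2.re)

/-- Extraction of the `𝒜`-coefficient of an element of `i·𝒜 ⊆ 𝒜_ℂ`. -/
def imEx (z : AC) : LorentzA := (z.1.im, z.2.im)

/-- The map `A₀ : ℍ₀ → M₂(𝒜)`,
`p₀·1 + i p₁·I + p₂·J + i p₃·K ↦ [[p₀ - σp₁, p₂ - σp₃], [-p₂ - σp₃, p₀ + σp₁]]`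
(written via coefficient extraction, so that it is a total function on `ℍ^{𝒜_ℂ}`
agreeing with `A₀` on `ℍ₀`). -/
def A0 (ζ : HAC) : M2A :=
  !![reEx ζ.re - sA * imEx ζ.imI, reEx ζ.imJ - sA * imEx ζ.imK;
     -reEx ζ.imJ - sA * imEx ζ.imK, reEx ζ.re + sA * imEx ζ.imI]

/-- The map `A₁ : ℍ₁ → M₂(𝒜)`,
`i q₀·1 + q₁·I + i q₂·J + q₃·K ↦ [[-q₁ - σq₀, -q₃ - σq₂], [-q₃ + σq₂, q₁ - σq₀]]`. -/
def A1 (ζ : HAC) : M2A :=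
  !![-reEx ζ.imI - sA * imEx ζ.re, -reEx ζ.imK - sA * imEx ζ.imJ;
     -reEx ζ.imK + sA * imEx ζ.imJ, reEx ζ.imI - sA * imEx ζ.re]

/-! In the coordinates `(q₀, q₁, q₂, q₃)` of `ℍ₁ ≅ 𝒜⁴`, the map `A₁` is a matrix of linear forms
that makes sense over every commutative ring with a square root `s` of `1`. Sums and differences of
its entries are `±2qᵢ` or `±2sqᵢ`, so the matrix determines the coordinates once `2` is invertible;
`s² = 1` turns its determinant into a diagonal quadratic form; and applying a ring homomorphism that
sends `s` to `-s` amounts, after transposition, to conjugating the coordinates and changing the sign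
of `q₀` only. -/

section SigmaMatrix

variable {R : Type*} [CommRing R]

/-- The matrix of `A₁` in the coordinates of `ℍ₁`, as an `R`-linear map on `R⁴`, with an arbitrary
element `s` of a commutative ring `R` in place of `σ`. -/
def sigmaMatrix (s : R) : (Fin 4 → R) →ₗ[R] Matrix (Fin 2) (Fin 2) R where
  toFun q := !![-q 1 - s * q 0, -q 3 - s * q 2; -q 3 + s * q 2, q 1 - s * q 0]
  map_add' p q := by
    ext i j; fin_cases i <;> fin_cases j <;> simp <;> ring
  map_smul' r q := by
    ext i j; fin_cases i <;> fin_cases j <;> simp <;> ring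

lemma sigmaMatrix_apply (s : R) (q : Fin 4 → R) :
    sigmaMatrix s q = !![-q 1 - s * q 0, -q 3 - s * q 2; -q 3 + s * q 2, q 1 - s * q 0] :=
  rfl

lemma sigmaMatrix_bijective {s : R} (hs : s * s = 1) (h2 : IsUnit (2 : R)) :
    Function.Bijective (sigmaMatrix s) := by
  obtain ⟨half, two_mul_half⟩ := h2.exists_right_inv
  refine Function.bijective_iff_has_inverse.mpr
    ⟨fun B ↦ ![-(half * s * (B 0 0 + B 1 1)), half * (B 1 1 - B 0 0),
      half * s * (B 1 0 - B 0 1), -(half * (B 0 1 + B 1 0))], fun q ↦ ?_, fun B ↦ ?_⟩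
  · ext i
    fin_cases i <;> simp [sigmaMatrix_apply]
    · linear_combination 2 * half * q 0 * hs + q 0 * two_mul_half
    · linear_combination q 1 * two_mul_half
    · linear_combination 2 * half * q 2 * hs + q 2 * two_mul_half
    · linear_combination q 3 * two_mul_half
  · ext i j
    fin_cases i <;> fin_cases j <;> simp [sigmaMatrix_apply]
    · linear_combination half * (B 0 0 + B 1 1) * hs + B 0 0 * two_mul_half
    · linear_combination -half * (B 1 0 - B 0 1) * hs + B 0 1 * two_mul_half
    · linear_combination half * (B 1 0 - B 0 1) * hs + B 1 0 * two_mul_half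
    · linear_combination half * (B 0 0 + B 1 1) * hs + B 1 1 * two_mul_half

lemma det_sigmaMatrix {s : R} (hs : s * s = 1) (q : Fin 4 → R) :
    (sigmaMatrix s q).det = q 0 * q 0 - q 1 * q 1 + q 2 * q 2 - q 3 * q 3 := by
  rw [sigmaMatrix_apply, Matrix.det_fin_two_of]
  linear_combination (q 0 * q 0 + q 2 * q 2) * hs

lemma neg_transpose_map_sigmaMatrix {S : Type*} [CommRing S] (c : R →+* S) {s : R} {t : S}
    (hc : c s = -t) (q : Fin 4 → R) :
    -((sigmaMatrix s q).map c).transpose =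
      sigmaMatrix t ![c (q 0), -c (q 1), -c (q 2), -c (q 3)] := by
  ext i j
  fin_cases i <;> fin_cases j <;> simp [sigmaMatrix_apply, hc] <;> ring

end SigmaMatrix

section LorentzNumbers

lemma sA_mul_sA : sA * sA = 1 := by
  simp [sA]

lemma isUnit_two_lorentzA : IsUnit (2 : LorentzA) :=
  Prod.isUnit_iff.mpr ⟨two_ne_zero.isUnit, two_ne_zero.isUnit⟩

lemma conjA_sA : conjA sA = -sA := by
  simp [conjA, sA]

lemma toAC_add (a b : LorentzA) : toAC (a + b) = toAC a + toAC b := by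
  simp [toAC]

lemma toAC_neg (a : LorentzA) : toAC (-a) = -toAC a := by
  simp [toAC]

lemma toAC_mul (a b : LorentzA) : toAC (a * b) = toAC a * toAC b := by
  simp [toAC]

lemma iAC_mul_iAC (a b : LorentzA) : iAC a * iAC b = -toAC (a * b) := by
  simp [iAC, toAC, mul_mul_mul_comm Complex.I]

end LorentzNumbers

section H1

lemma mk1_eq (q₀ q₁ q₂ q₃ : LorentzA) :
    mk1 q₀ q₁ q₂ q₃ = ⟨iAC q₀, toAC q₁, iAC q₂, toAC q₃⟩ := by
  unfold mk1
  ext : 1 <;>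
    simp only [Quaternion.re_add, Quaternion.imI_add, Quaternion.imJ_add, Quaternion.imK_add,
      Quaternion.re_mul, Quaternion.imI_mul, Quaternion.imJ_mul, Quaternion.imK_mul] <;>
    simp [qscalar, qI, qJ, qK]

/-- The coordinates `(q₀, q₁, q₂, q₃) ∈ 𝒜⁴` of `iq₀1 + q₁I + iq₂J + q₃K ∈ ℍ₁`, extended to an
`ℝ`-linear map on `ℍ^{𝒜_ℂ}` by discarding the parts of the coefficients that vanish on `ℍ₁`. -/
def h1Coords : HAC →ₗ[ℝ] Fin 4 → LorentzA where
  toFun ζ := ![imEx ζ.re, reEx ζ.imI, imEx ζ.imJ, reEx ζ.imK]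
  map_add' ζ ξ := by
    simp [imEx, reEx]
  map_smul' r ζ := by
    simp [imEx, reEx]

lemma h1Coords_apply (ζ : HAC) :
    h1Coords ζ = ![imEx ζ.re, reEx ζ.imI, imEx ζ.imJ, reEx ζ.imK] :=
  rfl

lemma h1Coords_mk1 (q₀ q₁ q₂ q₃ : LorentzA) :
    h1Coords (mk1 q₀ q₁ q₂ q₃) = ![q₀, q₁, q₂, q₃] := by
  rw [h1Coords_apply, mk1_eq]
  simp [imEx, reEx, iAC, toAC]

lemma bijOn_h1Coords : Set.BijOn h1Coords H1set Set.univ := by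
  refine Set.InvOn.bijOn (f' := fun q ↦ mk1 (q 0) (q 1) (q 2) (q 3)) ⟨?_, ?_⟩
    (Set.mapsTo_univ _ _) (fun q _ ↦ ⟨q 0, q 1, q 2, q 3, rfl⟩)
  · rintro _ ⟨q₀, q₁, q₂, q₃, rfl⟩
    simp [h1Coords_mk1]
  · intro q _
    ext i : 1
    fin_cases i <;> simp [h1Coords_mk1]

lemma h1Coords_qhat_star (ζ : HAC) :
    h1Coords (qhat (star ζ)) = ![conjA (h1Coords ζ 0), -conjA (h1Coords ζ 1),
      -conjA (h1Coords ζ 2), -conjA (h1Coords ζ 3)] := by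
  rw [h1Coords_apply, h1Coords_apply]
  simp [qhat, hatC, imEx, reEx, conjA]

lemma Hform_mk1 (p₀ p₁ p₂ p₃ q₀ q₁ q₂ q₃ : LorentzA) :
    Hform (mk1 p₀ p₁ p₂ p₃) (mk1 q₀ q₁ q₂ q₃) =
      toAC (-(p₀ * q₀) + p₁ * q₁ + -(p₂ * q₂) + p₃ * q₃) := by
  simp only [Hform, mk1_eq, iAC_mul_iAC, ← toAC_mul, ← toAC_neg, ← toAC_add]

end H1

section A1

lemma A1_eq_comp : A1 = (sigmaMatrix sA).restrictScalars ℝ ∘ₗ h1Coords :=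
  rfl

lemma A1_eq_sigmaMatrix (ζ : HAC) : A1 ζ = sigmaMatrix sA (h1Coords ζ) :=
  rfl

lemma isLinearMap_A1 : IsLinearMap ℝ A1 :=
  A1_eq_comp ▸ LinearMap.isLinear _

lemma A1_mk1 (q₀ q₁ q₂ q₃ : LorentzA) :
    A1 (mk1 q₀ q₁ q₂ q₃) =
      !![-q₁ - sA * q₀, -q₃ - sA * q₂; -q₃ + sA * q₂, q₁ - sA * q₀] := by
  rw [A1_eq_sigmaMatrix, h1Coords_mk1]
  rfl

lemma bijOn_A1 : Set.BijOn A1 H1set Set.univ :=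
  (Set.bijOn_univ.mpr (sigmaMatrix_bijective sA_mul_sA isUnit_two_lorentzA)).comp bijOn_h1Coords

lemma Hform_self_eq_neg_det_A1 {q : HAC} (hq : q ∈ H1set) :
    Hform q q = toAC (-(A1 q).det) := by
  obtain ⟨q₀, q₁, q₂, q₃, rfl⟩ := hq
  have det_eq : (A1 (mk1 q₀ q₁ q₂ q₃)).det = q₀ * q₀ - q₁ * q₁ + q₂ * q₂ - q₃ * q₃ := by
    rw [A1_eq_sigmaMatrix, h1Coords_mk1]
    exact det_sigmaMatrix sA_mul_sA _
  rw [Hform_mk1, det_eq]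
  congr 1
  ring

lemma A1_qhat_star (ζ : HAC) : A1 (qhat (star ζ)) = -ctrans (A1 ζ) := by
  rw [A1_eq_sigmaMatrix, h1Coords_qhat_star, ctrans, A1_eq_sigmaMatrix]
  exact (neg_transpose_map_sigmaMatrix (RingEquiv.prodComm : ℝ × ℝ ≃+* ℝ × ℝ).toRingHom
    conjA_sA _).symm

end A1

/-- `A₁ : ℍ₁ → M₂(𝒜)`,
`iq₀·1 + q₁·I + iq₂·J + q₃·K ↦ [[-q₁ - σq₀, -q₃ - σq₂], [-q₃ + σq₂, q₁ - σq₀]]`,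
is a real-linear isomorphism, and for every `q ∈ ℍ₁` one has `H(q,q) = -det A₁(q)` and
`A₁(hat (q̄)) = -A₁(q)*`. -/
theorem stmt4 :
    (∀ q₀ q₁ q₂ q₃ : LorentzA, A1 (mk1 q₀ q₁ q₂ q₃) =
      !![-q₁ - sA * q₀, -q₃ - sA * q₂; -q₃ + sA * q₂, q₁ - sA * q₀]) ∧
    (∀ p ∈ H1set, ∀ q ∈ H1set, A1 (p + q) = A1 p + A1 q) ∧
    (∀ (r : ℝ), ∀ q ∈ H1set, A1 (r • q) = r • A1 q) ∧
    Set.BijOn A1 H1set Set.univ ∧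
    (∀ q ∈ H1set, Hform q q = toAC (-(A1 q).det) ∧ A1 (qhat (star q)) = -ctrans (A1 q)) :=
  ⟨A1_mk1, fun p _ q _ ↦ isLinearMap_A1.map_add p q, fun r q _ ↦ isLinearMap_A1.map_smul r q,
    bijOn_A1, fun q hq ↦ ⟨Hform_self_eq_neg_det_A1 hq, A1_qhat_star q⟩⟩
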